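/- For every i ∈ {1, …, |N(σ)|} and every ψ ∈ N(σ) with Pr[ψ ↝ i] > 0: E[λ_i | ψ ↝ i] ≤ (α·E[μ* | ψ ↝ i] / (Q − f(ρ_i)))·ε_i. -/

import Mathlib

/-!
Common framework for the Stochastic Submodular Cover problem
(Hellerstein–Kletenik–Parthasarathy, "A Tight Bound for Stochastic Submodular Cover").
-/

namespace SSC

open Finset
open scoped Classical

noncomputable section

variable {E O : Type*}

/-- A subrealization assigns to each item either a state or `none` (unassigned).
A realization corresponds to the case where every item is assigned. -/
abbrev Sub (E O : Type*) := E → Option O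

/-- `subext ψ ψ'` means `ψ ⊆ ψ'` as partial assignments of states to items. -/
def subext (ψ ψ' : Sub E O) : Prop := ∀ e o, ψ e = some o → ψ' e = some o

/-- `ssubext ψ ψ'` means `ψ ⊂ ψ'` (strict extension). -/
def ssubext (ψ ψ' : Sub E O) : Prop := subext ψ ψ' ∧ ψ ≠ ψ'

/-- Extend a subrealization `ψ` by assigning state `o` to item `e`. -/
def updateSub [DecidableEq E] (ψ : Sub E O) (e : E) (o : O) : Sub E O :=
  fun e' => if e' = e then some o else ψ e'

/-- View a (full) realization as a subrealization. -/
def toSub (φ : E → O) : Sub E O := fun e => some (φ e)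

variable [Fintype E] [DecidableEq E] [Fintype O] [DecidableEq O]

/-- An instance of the Stochastic Submodular Cover problem: positive item costs `c`,
a probability mass function `p` on realizations with mutually independent item states,
and a utility function `f` on subrealizations which is zero on the empty subrealization,
nonnegative, monotone and submodular (pointwise polymatroid), and equal to the goal
value `Q > 0` on every full realization (coverability). -/
structure Problem (E O : Type*) [Fintype E] [DecidableEq E] [Fintype O] [DecidableEq O] where
  c : E → ℝ
  c_pos : ∀ e, 0 < c e
  p : (E → O) → ℝ
  p_nonneg : ∀ φ, 0 ≤ p φ
  p_sum : ∑ φ : E → O, p φ = 1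
  indep : ∀ φ : E → O, p φ = ∏ e : E, ∑ φ' : E → O, if φ' e = φ e then p φ' else 0
  f : Sub E O → ℝ
  f_nonneg : ∀ ψ, 0 ≤ f ψ
  f_empty : f (fun _ => none) = 0
  f_mono : ∀ ψ ψ' : Sub E O, subext ψ ψ' → f ψ ≤ f ψ'
  f_submod : ∀ (ψ ψ' : Sub E O) (e : E) (o : O), subext ψ ψ' → ψ' e = none →
      f (updateSub ψ' e o) - f ψ' ≤ f (updateSub ψ e o) - f ψ
  Q : ℝ
  Q_pos : 0 < Q
  f_cover : ∀ φ : E → O, f (toSub φ) = Q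

variable (M : Problem E O)

/-- Expectation of a random variable `X` with respect to the random realization `Φ`. -/
def Ex (X : (E → O) → ℝ) : ℝ := ∑ φ : E → O, M.p φ * X φ

/-- Probability of an event `A` of the random realization `Φ`. -/
def Pr (A : (E → O) → Prop) : ℝ := ∑ φ : E → O, if A φ then M.p φ else 0

/-- Conditional expectation `E[X | A]`. -/
def cEx (X : (E → O) → ℝ) (A : (E → O) → Prop) : ℝ :=
  (∑ φ : E → O, if A φ then M.p φ * X φ else 0) / Pr M A

/-- The random marginal increase in utility `F_ψ(e)` from observing the state of `e`. -/
def Fm (ψ : Sub E O) (e : E) (φ : E → O) : ℝ := M.f (updateSub ψ e (φ e)) - M.f ψ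

/-- The unit price `υ(e|ψ) = c(e) / E[F_ψ(e)]`. -/
def price (ψ : Sub E O) (e : E) : ℝ := M.c e / Ex M (Fm M ψ e)

/-- An adaptive covering policy: at every subrealization `ψ` with `f ψ < Q` it selects an
item outside `dom ψ`. -/
def IsPolicy (π : Sub E O → E) : Prop := ∀ ψ : Sub E O, M.f ψ < M.Q → ψ (π ψ) = none

/-- The `α`-approximate adaptive greedy policy: at every `ψ` with `f ψ < Q` the unit price of
the selected item `σ ψ` is at most `α` times the minimum unit price, i.e.
`υ(σ ψ | ψ) ≤ α · υ(e | ψ)` for every `e ∉ dom ψ`, written multiplicatively so that infinite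
unit prices (zero expected marginal utility) are handled correctly. -/
def IsGreedy (α : ℝ) (σ : Sub E O → E) : Prop :=
  IsPolicy M σ ∧
    ∀ ψ : Sub E O, M.f ψ < M.Q → ∀ e : E, ψ e = none →
      M.c (σ ψ) * Ex M (Fm M ψ e) ≤ α * M.c e * Ex M (Fm M ψ (σ ψ))

/-- One step of executing policy `π` on realization `φ`. -/
def stepPol (π : Sub E O → E) (φ : E → O) (ψ : Sub E O) : Sub E O :=
  if M.f ψ < M.Q then updateSub ψ (π ψ) (φ (π ψ)) else ψ

/-- The subrealization reached after `n` steps of executing `π` on `φ`. -/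
def execAux (π : Sub E O → E) (φ : E → O) : ℕ → Sub E O
  | 0 => fun _ => none
  | n + 1 => stepPol M π φ (execAux π φ n)

/-- The cover `Ψ(π)` constructed by executing `π` on realization `φ`. -/
def cover (π : Sub E O → E) (φ : E → O) : Sub E O := execAux M π φ (Fintype.card E)

/-- `ψ` is visited when executing `π` on realization `φ`. -/
def visits (π : Sub E O → E) (φ : E → O) (ψ : Sub E O) : Prop := ∃ n, execAux M π φ n = ψ

/-- The set `S(π)` of items selected when executing `π` on `φ`. -/
def Ssel (π : Sub E O → E) (φ : E → O) : Finset E :=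
  Finset.univ.filter fun e => cover M π φ e ≠ none

/-- The cost `C(π)` incurred when executing `π` on `φ`. -/
def C (π : Sub E O → E) (φ : E → O) : ℝ := ∑ e ∈ Ssel M π φ, M.c e

/-- An adaptive covering policy of minimum expected cost. -/
def IsOptimal (π : Sub E O → E) : Prop :=
  IsPolicy M π ∧ ∀ π' : Sub E O → E, IsPolicy M π' → Ex M (C M π) ≤ Ex M (C M π')

/-- `N(π)`: the non-leaf nodes of the decision tree of `π` — subrealizations with
`f ψ < Q` that are visited with positive probability. -/
def Nnodes (π : Sub E O → E) : Finset (Sub E O) :=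
  Finset.univ.filter fun ψ => M.f ψ < M.Q ∧ 0 < Pr M fun φ => visits M π φ ψ

/-- The event `ψ ↝ i`, for a marker located at utility value `b = f(ρ_i)`:
`ψ` is the last subrealization visited by `σ` (on the given realization) whose
utility is at most `b`. -/
def leadsTo (σ : Sub E O → E) (b : ℝ) (ψ : Sub E O) (φ : E → O) : Prop :=
  visits M σ φ ψ ∧ M.f ψ ≤ b ∧
    ∀ ψ' : Sub E O, visits M σ φ ψ' → M.f ψ' ≤ b → subext ψ' ψ

/-- The revenue `λ_i = υ_ψ · ε_i` collected by `σ` from the marker located at utility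
value `b = f(ρ_i)` with interval length `εi`, where `ψ` is the unique subrealization
with `ψ ↝ i`. -/
def lam (σ : Sub E O → E) (b εi : ℝ) (φ : E → O) : ℝ :=
  ∑ ψ : Sub E O, if leadsTo M σ b ψ φ then price M ψ (σ ψ) * εi else 0

/-- The revenue `μ(e)` collected by the optimal policy `πs` from item `e`
(relative to the greedy policy `σ`, both executed on the same realization). -/
def mu (σ πs : Sub E O → E) (e : E) (φ : E → O) : ℝ :=
  if e ∈ Ssel M πs φ then
    if e ∈ Ssel M σ φ then
      ∑ ψ : Sub E O,
        if visits M σ φ ψ ∧ M.f ψ < M.Q ∧ σ ψ = e then price M ψ e * Fm M ψ e φ else 0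
    else M.c e
  else 0

/-- The total revenue `μ*` collected by the optimal policy. -/
def muStar (σ πs : Sub E O → E) (φ : E → O) : ℝ := ∑ e : E, mu M σ πs e φ

/-- Replay of the internal state of policy `πs` in the second stage of the hybrid policy:
starting from the empty subrealization, repeatedly query `πs`; an item whose state is
already recorded in `ψ'` is not re-selected, its recorded state being used instead. -/
def replayAux (πs : Sub E O → E) (ψ' : Sub E O) : ℕ → Sub E O
  | 0 => fun _ => none
  | n + 1 =>
    if M.f (replayAux πs ψ' n) < M.Q then
      match ψ' (πs (replayAux πs ψ' n)) with
      | some o => updateSub (replayAux πs ψ' n) (πs (replayAux πs ψ' n)) o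
      | none => replayAux πs ψ' n
    else replayAux πs ψ' n

/-- The hybrid policy `π^ψ0`: follow `σ` until `ψ0` is visited, then switch to executing
`πs` from the root of its tree, never re-selecting an item of `dom ψ0` and using the
state recorded in `ψ0` instead. -/
def hybrid (σ πs : Sub E O → E) (ψ0 : Sub E O) : Sub E O → E := fun ψ' =>
  if subext ψ0 ψ' then πs (replayAux M πs ψ' (Fintype.card E)) else σ ψ'

/-- `δ⁺_ψ0(e)`: the marginal utility obtained by the hybrid policy `π^ψ0` when it selects
`e` during its second stage, and `0` if `e` is not selected in the second stage. -/
def deltaPlus (σ πs : Sub E O → E) (ψ0 : Sub E O) (e : E) (φ : E → O) : ℝ :=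
  ∑ ψ' : Sub E O,
    if subext ψ0 ψ' ∧ visits M (hybrid M σ πs ψ0) φ ψ' ∧
        ssubext ψ' (cover M (hybrid M σ πs ψ0) φ) ∧ hybrid M σ πs ψ0 ψ' = e
    then Fm M ψ' e φ else 0


/-! ### Helper lemmas -/

theorem subext_refl' (ψ : Sub E O) : subext ψ ψ := fun _ _ h => h

theorem subext_trans' {a b c : Sub E O} (h1 : subext a b) (h2 : subext b c) : subext a c :=
  fun e o h => h2 e o (h1 e o h)

theorem subext_antisymm' {a b : Sub E O} (h1 : subext a b) (h2 : subext b a) : a = b := by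
  funext e
  cases ha : a e with
  | some o => exact (h1 e o ha).symm
  | none =>
    cases hb : b e with
    | some o => have := h2 e o hb; rw [ha] at this; cases this
    | none => rfl

theorem subext_update {ψ : Sub E O} {e : E} (o : O) (h : ψ e = none) :
    subext ψ (updateSub ψ e o) := by
  intro e' o' h'
  unfold updateSub
  split_ifs with he
  · subst he; rw [h] at h'; cases h'
  · exact h'

/-- marginals -/
def marg (e : E) (o : O) : ℝ := ∑ φ' : E → O, if φ' e = o then M.p φ' else 0

theorem marg_sum (e : E) (h : O → ℝ) :
    ∑ o, marg M e o * h o = Ex M (fun φ => h (φ e)) := by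
  unfold marg Ex
  simp_rw [Finset.sum_mul]
  rw [Finset.sum_comm]
  refine Finset.sum_congr rfl fun φ _ => ?_
  simp [ite_mul]

theorem p_update (φ : E → O) (e : E) (o : O) :
    M.p (Function.update φ e o) * marg M e (φ e) = M.p φ * marg M e o := by
  have h : ∀ φ, M.p φ = ∏ e, marg M e (φ e) := M.indep
  rw [h φ, h (Function.update φ e o), ← Finset.mul_prod_erase univ _ (Finset.mem_univ e),
    ← Finset.mul_prod_erase univ (fun e => marg M e (φ e)) (Finset.mem_univ e)]
  have : ∏ x ∈ univ.erase e, marg M x (Function.update φ e o x)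
      = ∏ x ∈ univ.erase e, marg M x (φ x) := by
    refine Finset.prod_congr rfl fun x hx => ?_
    rw [Function.update_of_ne (Finset.ne_of_mem_erase hx)]
  rw [this]
  simp only [Function.update_self]
  ring

theorem indep_mul (e : E) (G : (E → O) → ℝ) (h : O → ℝ)
    (hG : ∀ φ o, G (Function.update φ e o) = G φ) :
    ∑ φ, M.p φ * (G φ * h (φ e)) = (∑ φ, M.p φ * G φ) * Ex M (fun φ => h (φ e)) := by
  have h1 : ∑ o, marg M e o = 1 := by
    have := marg_sum M e (fun _ => 1)
    simpa [Ex, M.p_sum] using this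
  rw [← marg_sum M e h, Finset.sum_mul_sum, ← Finset.sum_product', Finset.univ_product_univ]
  have h2 : ∑ φ, M.p φ * (G φ * h (φ e))
      = ∑ x : (E → O) × O, M.p x.1 * marg M e x.2 * (G x.1 * h (x.1 e)) := by
    rw [Fintype.sum_prod_type]
    refine Finset.sum_congr rfl fun φ _ => ?_
    simp only
    rw [← Finset.sum_mul, ← Finset.mul_sum, h1, mul_one]
  rw [h2]
  have hinv : Function.Involutive
      (fun x : (E → O) × O => (Function.update x.1 e x.2, x.1 e)) := by
    rintro ⟨φ, o⟩
    simp
  rw [← Equiv.sum_comp hinv.toPerm (fun x : (E → O) × O => M.p x.1 * G x.1 * (marg M e x.2 * h x.2))]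
  refine Finset.sum_congr rfl fun x _ => ?_
  simp only [Function.Involutive.coe_toPerm]
  rw [hG, ← p_update M x.1 e x.2]
  ring

theorem Fm_nonneg (ψ : Sub E O) (e : E) (φ : E → O) (h : ψ e = none) : 0 ≤ Fm M ψ e φ := by
  have := M.f_mono ψ _ (subext_update (φ e) h)
  unfold Fm; linarith

theorem Ex_Fm_nonneg (ψ : Sub E O) (e : E) (h : ψ e = none) : 0 ≤ Ex M (Fm M ψ e) :=
  Finset.sum_nonneg fun φ _ => mul_nonneg (M.p_nonneg φ) (Fm_nonneg M ψ e φ h)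

theorem price_nonneg (ψ : Sub E O) (e : E) (h : ψ e = none) : 0 ≤ price M ψ e :=
  div_nonneg (M.c_pos e).le (Ex_Fm_nonneg M ψ e h)

/-- fill in the items of `S` not assigned by `ψ` -/
def fillSub (ψ : Sub E O) (φ : E → O) (S : Finset E) : Sub E O :=
  fun e => if ψ e = none ∧ e ∈ S then some (φ e) else ψ e

theorem fill_bound (ψ : Sub E O) (φ : E → O) (S : Finset E) :
    M.f (fillSub ψ φ S) - M.f ψ ≤ ∑ e ∈ S, if ψ e = none then Fm M ψ e φ else 0 := by
  induction S using Finset.induction_on with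
  | empty =>
    have h0 : fillSub ψ φ ∅ = ψ := by funext e; simp [fillSub]
    simp [h0]
  | insert a S ha ih =>
    rw [Finset.sum_insert ha]
    split_ifs with hn
    · have h1 : fillSub ψ φ (insert a S) = updateSub (fillSub ψ φ S) a (φ a) := by
        funext e
        unfold fillSub updateSub
        by_cases he : e = a
        · subst he; simp [hn]
        · simp [he]
      have h2 : subext ψ (fillSub ψ φ S) := by
        intro e o h; simp [fillSub, h]
      have h3 : fillSub ψ φ S a = none := by simp [fillSub, ha, hn]
      have := M.f_submod ψ _ a (φ a) h2 h3
      rw [h1]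
      unfold Fm at *
      linarith
    · have h1 : fillSub ψ φ (insert a S) = fillSub ψ φ S := by
        funext e
        unfold fillSub
        by_cases he : e = a
        · subst he; simp [hn]
        · simp [he]
      rw [h1]; linarith

theorem Ex_Fm_pos {α : ℝ} {σ : Sub E O → E} (hσ : IsGreedy M α σ) (ψ : Sub E O)
    (hψ : M.f ψ < M.Q) : 0 < Ex M (Fm M ψ (σ ψ)) := by
  have hn := hσ.1 ψ hψ
  rcases (Ex_Fm_nonneg M ψ _ hn).lt_or_eq with h | h
  · exact h
  exfalso
  have hz : ∀ e, ψ e = none → Ex M (Fm M ψ e) ≤ 0 := by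
    intro e he
    have h2 := hσ.2 ψ hψ e he
    rw [← h, mul_zero] at h2
    by_contra! h3
    exact absurd h2 (not_le.mpr (mul_pos (M.c_pos _) h3))
  have hb : ∀ φ, M.Q - M.f ψ ≤ ∑ e, if ψ e = none then Fm M ψ e φ else 0 := by
    intro φ
    have h1 := fill_bound M ψ φ univ
    have h2 : fillSub ψ φ univ = toSub (fun e => (ψ e).getD (φ e)) := by
      funext e
      unfold fillSub toSub
      cases hx : ψ e <;> simp [hx]
    rw [h2, M.f_cover] at h1
    exact h1
  have h4 : M.Q - M.f ψ ≤ ∑ φ, M.p φ * ∑ e, if ψ e = none then Fm M ψ e φ else 0 := by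
    calc M.Q - M.f ψ = ∑ φ, M.p φ * (M.Q - M.f ψ) := by
          rw [← Finset.sum_mul, M.p_sum, one_mul]
      _ ≤ _ := Finset.sum_le_sum fun φ _ => mul_le_mul_of_nonneg_left (hb φ) (M.p_nonneg φ)
  have h5 : ∑ φ, M.p φ * ∑ e, (if ψ e = none then Fm M ψ e φ else 0) ≤ 0 := by
    simp_rw [Finset.mul_sum]
    rw [Finset.sum_comm]
    refine Finset.sum_nonpos fun e _ => ?_
    by_cases he : ψ e = none
    · simpa [he, Ex] using hz e he
    · simp [he]
  linarith

section exec
variable {M} {π : Sub E O → E}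


theorem exec_step_sub (hπ : IsPolicy M π) (φ : E → O) (n : ℕ) :
    subext (execAux M π φ n) (execAux M π φ (n + 1)) := by
  show subext _ (stepPol M π φ _)
  unfold stepPol
  split_ifs with h
  · exact subext_update _ (hπ _ h)
  · exact subext_refl' _

theorem exec_mono (hπ : IsPolicy M π) (φ : E → O) {m n : ℕ} (h : m ≤ n) :
    subext (execAux M π φ m) (execAux M π φ n) := by
  induction n, h using Nat.le_induction with
  | base => exact subext_refl' _
  | succ n _ ih => exact subext_trans' ih (exec_step_sub hπ φ n)


theorem exec_consistent (φ : E → O) (n : ℕ) : subext (execAux M π φ n) (toSub φ) := by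
  induction n with
  | zero => intro e o h; cases h
  | succ n ih =>
    show subext (stepPol M π φ _) _
    unfold stepPol
    split_ifs with h
    · intro e o
      unfold updateSub toSub
      split_ifs with he
      · subst he; exact id
      · exact ih e o
    · exact ih

theorem exec_card (hπ : IsPolicy M π) (φ : E → O) (n : ℕ) (h : M.f (execAux M π φ n) < M.Q) :
    (univ.filter fun e => execAux M π φ n e ≠ none).card = n := by
  induction n with
  | zero => simp [execAux]
  | succ n ih =>
    have h1 : M.f (execAux M π φ n) < M.Q :=
      lt_of_le_of_lt (M.f_mono _ _ (exec_step_sub hπ φ n)) h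
    have h2 : execAux M π φ (n + 1)
        = updateSub (execAux M π φ n) (π (execAux M π φ n)) (φ (π (execAux M π φ n))) := by
      show stepPol M π φ _ = _
      unfold stepPol; rw [if_pos h1]
    have h3 := hπ _ h1
    have h4 : (univ.filter fun e => execAux M π φ (n + 1) e ≠ none)
        = insert (π (execAux M π φ n)) (univ.filter fun e => execAux M π φ n e ≠ none) := by
      ext e
      rw [Finset.mem_insert, Finset.mem_filter, Finset.mem_filter, h2]
      simp only [Finset.mem_univ, true_and, updateSub]
      by_cases he : e = π (execAux M π φ n) <;> simp [he]
    rw [h4, Finset.card_insert_of_notMem (by simp [h3]), ih h1]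

theorem cover_full (hπ : IsPolicy M π) (φ : E → O) : M.Q ≤ M.f (cover M π φ) := by
  by_contra! h
  have h1 := exec_card hπ φ _ h
  have h2 : (univ.filter fun e => execAux M π φ (Fintype.card E) e ≠ none) = univ :=
    Finset.eq_univ_of_card _ h1
  have h3 : subext (toSub φ) (cover M π φ) := by
    intro e o he
    have : e ∈ (univ.filter fun e => execAux M π φ (Fintype.card E) e ≠ none) := by
      rw [h2]; exact Finset.mem_univ e
    obtain ⟨o', ho'⟩ := Option.ne_none_iff_exists'.mp (Finset.mem_filter.mp this).2
    have h4 := exec_consistent φ _ e o' ho'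
    rw [he] at h4
    cases h4
    exact ho'
  have h4 := M.f_mono _ _ h3
  rw [M.f_cover] at h4
  linarith

theorem exec_sub_cover (hπ : IsPolicy M π) (φ : E → O) (n : ℕ) : subext (execAux M π φ n) (cover M π φ) := by
  rcases le_total n (Fintype.card E) with h | h
  · exact exec_mono hπ φ h
  · have : execAux M π φ n = cover M π φ := by
      induction n, h using Nat.le_induction with
      | base => rfl
      | succ n _ ih =>
        show stepPol M π φ _ = _
        unfold stepPol
        rw [ih, if_neg (not_lt.mpr (cover_full hπ φ))]
    rw [this]; exact subext_refl' _

theorem exec_update (hπ : IsPolicy M π) (φ : E → O) (e : E) (o : O) (n : ℕ) (h : execAux M π φ n e = none) :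
    execAux M π (Function.update φ e o) n = execAux M π φ n := by
  induction n with
  | zero => rfl
  | succ n ih =>
    have h0 : execAux M π φ n e = none := by
      cases hx : execAux M π φ n e with
      | none => rfl
      | some o' => rw [exec_step_sub hπ φ n e o' hx] at h; cases h
    have ih := ih h0
    show stepPol M π _ (execAux M π (Function.update φ e o) n) = stepPol M π φ (execAux M π φ n)
    change stepPol M π φ (execAux M π φ n) e = none at h
    rw [ih]
    unfold stepPol at *
    split_ifs with hf
    · rw [if_pos hf] at h
      have hne : π (execAux M π φ n) ≠ e := by
        rintro he
        simp [updateSub, he] at h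
      rw [Function.update_of_ne hne]
    · rfl

theorem visits_update (hπ : IsPolicy M π) (φ : E → O) (e : E) (o : O) (ψ : Sub E O) (h : ψ e = none) :
    visits M π (Function.update φ e o) ψ ↔ visits M π φ ψ := by
  have key : ∀ φ o, visits M π φ ψ → visits M π (Function.update φ e o) ψ := by
    rintro φ o ⟨n, hn⟩
    exact ⟨n, by rw [exec_update hπ φ e o n (by rw [hn]; exact h), hn]⟩
  refine ⟨fun h1 => ?_, key φ o⟩
  have := key _ (φ e) h1
  simpa using this

theorem Ssel_update (hπ : IsPolicy M π) (φ : E → O) (e : E) (o : O) :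
    e ∈ Ssel M π (Function.update φ e o) ↔ e ∈ Ssel M π φ := by
  have key : ∀ φ o, e ∉ Ssel M π φ → e ∉ Ssel M π (Function.update φ e o) := by
    intro φ o h
    simp only [Ssel, Finset.mem_filter, Finset.mem_univ, true_and, not_not] at h ⊢
    unfold cover at *
    rw [exec_update hπ φ e o _ h]
    exact h
  refine ⟨fun h1 => ?_, fun h1 => ?_⟩
  · by_contra h
    exact key φ o h h1
  · by_contra h
    have := key _ (φ e) h
    simp at this
    exact this h1


theorem exists_node {φ : E → O} {e : E} (h : e ∈ Ssel M π φ) :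
    ∃ ψ, visits M π φ ψ ∧ M.f ψ < M.Q ∧ π ψ = e := by
  have key : ∀ n, execAux M π φ n e ≠ none → ∃ ψ, visits M π φ ψ ∧ M.f ψ < M.Q ∧ π ψ = e := by
    intro n
    induction n with
    | zero => intro h; exact absurd rfl h
    | succ n ih =>
      intro h
      by_cases h0 : execAux M π φ n e = none
      · change stepPol M π φ (execAux M π φ n) e ≠ none at h
        unfold stepPol at h
        split_ifs at h with hf
        · refine ⟨_, ⟨n, rfl⟩, hf, ?_⟩
          by_contra hne
          unfold updateSub at h
          rw [if_neg (Ne.symm hne)] at h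
          exact h h0
        · exact absurd h0 h
      · exact ih h0
  exact key _ (Finset.mem_filter.mp h).2

theorem mem_Ssel_of_visits (hπ : IsPolicy M π) {φ : E → O} {ψ : Sub E O} (h : visits M π φ ψ) (hf : M.f ψ < M.Q) :
    π ψ ∈ Ssel M π φ := by
  obtain ⟨n, rfl⟩ := h
  have h1 : execAux M π φ (n + 1) (π (execAux M π φ n)) = some (φ (π (execAux M π φ n))) := by
    show stepPol M π φ _ _ = _
    unfold stepPol updateSub
    simp [hf]
  have h2 := exec_sub_cover hπ φ (n + 1) _ _ h1
  simp [Ssel, h2]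

theorem leadsTo_iff (hπ : IsPolicy M π) {b : ℝ} {ψ : Sub E O} (hf : M.f ψ < M.Q) (φ : E → O) :
    leadsTo M π b ψ φ ↔
      visits M π φ ψ ∧ M.f ψ ≤ b ∧ b < M.f (updateSub ψ (π ψ) (φ (π ψ))) := by
  unfold leadsTo
  refine and_congr_right fun hv => and_congr_right fun hb => ?_
  obtain ⟨n, rfl⟩ := hv
  have h1 : execAux M π φ (n + 1)
      = updateSub (execAux M π φ n) (π (execAux M π φ n)) (φ (π (execAux M π φ n))) := by
    show stepPol M π φ _ = _
    unfold stepPol; rw [if_pos hf]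
  constructor
  · intro h
    by_contra! hlt
    rw [← h1] at hlt
    have h2 := h _ ⟨n + 1, rfl⟩ hlt (π (execAux M π φ n)) (φ (π (execAux M π φ n)))
      (by rw [h1]; simp [updateSub])
    rw [hπ _ hf] at h2
    cases h2
  · rintro h ψ' ⟨m, rfl⟩ hm
    rcases Nat.lt_or_ge n m with hnm | hnm
    · have h2 := M.f_mono _ _ (exec_mono hπ φ (Nat.succ_le_of_lt hnm))
      rw [Nat.succ_eq_add_one, h1] at h2
      linarith
    · exact exec_mono hπ φ hnm

theorem leadsTo_update (hπ : IsPolicy M π) {b : ℝ} {ψ : Sub E O} (hf : M.f ψ < M.Q) (φ : E → O) (e : E) (o : O)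
    (he : ψ e = none) (hne : e ≠ π ψ) :
    leadsTo M π b ψ (Function.update φ e o) ↔ leadsTo M π b ψ φ := by
  rw [leadsTo_iff hπ hf, leadsTo_iff hπ hf, visits_update hπ φ e o ψ he,
    Function.update_of_ne hne.symm]

theorem cover_bound (hπ : IsPolicy M π) {φ : E → O} {ψ : Sub E O} (hc : subext ψ (toSub φ)) :
    M.Q - M.f ψ ≤ ∑ e ∈ Ssel M π φ, if ψ e = none then Fm M ψ e φ else 0 := by
  have h1 := fill_bound M ψ φ (Ssel M π φ)
  have h2 : subext (cover M π φ) (fillSub ψ φ (Ssel M π φ)) := by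
    intro e o he
    have h3 : e ∈ Ssel M π φ := by simp [Ssel, he]
    have h4 : some (φ e) = some o := exec_consistent φ _ e o he
    unfold fillSub
    split_ifs with hcond
    · exact h4
    · have h5 : ψ e ≠ none := fun h => hcond ⟨h, h3⟩
      obtain ⟨o', ho'⟩ := Option.ne_none_iff_exists'.mp h5
      have h6 : some (φ e) = some o' := hc e o' ho'
      rw [ho', ← h6, h4]
  have h3 := M.f_mono _ _ h2
  have h4 := cover_full hπ φ
  linarith

end exec

theorem mu_nonneg {σ : Sub E O → E} (hσ : IsPolicy M σ) (πs : Sub E O → E) (e : E)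
    (φ : E → O) : 0 ≤ mu M σ πs e φ := by
  unfold mu
  split_ifs
  · refine Finset.sum_nonneg fun ψ _ => ?_
    split_ifs with h
    · obtain ⟨_, h2, rfl⟩ := h
      have := hσ ψ h2
      exact mul_nonneg (price_nonneg M _ _ this) (Fm_nonneg M _ _ _ this)
    · exact le_rfl
  · exact (M.c_pos e).le
  · exact le_rfl

theorem mu_lower {α : ℝ} {σ : Sub E O → E} (hσ : IsGreedy M α σ) {πs : Sub E O → E}
    (hπs : IsPolicy M πs) (e : E) (A : (E → O) → Prop)
    (hA : ∀ φ o, A (Function.update φ e o) ↔ A φ) :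
    M.c e * ∑ φ, M.p φ * (if A φ ∧ e ∈ Ssel M πs φ then 1 else 0)
      ≤ ∑ φ, if A φ then M.p φ * mu M σ πs e φ else 0 := by
  have e1 : ∀ φ, (if A φ then M.p φ * mu M σ πs e φ else 0)
      = M.p φ * ((if A φ ∧ e ∈ Ssel M πs φ ∧ e ∉ Ssel M σ φ then 1 else 0) * M.c e)
        + ∑ ψ, M.p φ * ((if (A φ ∧ e ∈ Ssel M πs φ ∧ e ∈ Ssel M σ φ) ∧
            visits M σ φ ψ ∧ M.f ψ < M.Q ∧ σ ψ = e then 1 else 0)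
            * (price M ψ e * Fm M ψ e φ)) := by
    intro φ
    unfold mu
    by_cases h1 : A φ <;> by_cases h2 : e ∈ Ssel M πs φ <;> by_cases h3 : e ∈ Ssel M σ φ <;>
      simp [h1, h2, h3, Finset.mul_sum]
  have e2 : ∀ ψ : Sub E O, ∑ φ, M.p φ * ((if (A φ ∧ e ∈ Ssel M πs φ ∧ e ∈ Ssel M σ φ) ∧
            visits M σ φ ψ ∧ M.f ψ < M.Q ∧ σ ψ = e then 1 else 0)
            * (price M ψ e * Fm M ψ e φ))
      = ∑ φ, M.p φ * ((if (A φ ∧ e ∈ Ssel M πs φ ∧ e ∈ Ssel M σ φ) ∧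
            visits M σ φ ψ ∧ M.f ψ < M.Q ∧ σ ψ = e then 1 else 0) * M.c e) := by
    intro ψ
    by_cases hψ : M.f ψ < M.Q ∧ σ ψ = e
    · have hn : ψ e = none := by rw [← hψ.2]; exact hσ.1 ψ hψ.1
      have h1 := indep_mul M e
        (fun φ => if (A φ ∧ e ∈ Ssel M πs φ ∧ e ∈ Ssel M σ φ) ∧
            visits M σ φ ψ ∧ M.f ψ < M.Q ∧ σ ψ = e then 1 else 0)
        (fun o => price M ψ e * (M.f (updateSub ψ e o) - M.f ψ))
        (by
          intro φ o
          simp only [hA, Ssel_update hπs, Ssel_update hσ.1, visits_update hσ.1 φ e o ψ hn])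
      have h2 : Ex M (fun φ => price M ψ e * (M.f (updateSub ψ e (φ e)) - M.f ψ)) = M.c e := by
        have hp := Ex_Fm_pos M hσ ψ hψ.1
        rw [hψ.2] at hp
        have : Ex M (fun φ => price M ψ e * (M.f (updateSub ψ e (φ e)) - M.f ψ))
            = price M ψ e * Ex M (Fm M ψ e) := by
          unfold Ex Fm
          rw [Finset.mul_sum]
          exact Finset.sum_congr rfl fun φ _ => by ring
        rw [this, price, div_mul_cancel₀ _ hp.ne']
      rw [h2, Finset.sum_mul] at h1
      unfold Fm
      rw [h1]
      exact Finset.sum_congr rfl fun φ _ => by ring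
    · refine Finset.sum_congr rfl fun φ _ => ?_
      rw [if_neg (fun h => hψ h.2.2)]
      simp
  simp_rw [e1]
  rw [Finset.sum_add_distrib, Finset.sum_comm (s := univ) (t := univ)]
  simp_rw [e2]
  rw [Finset.sum_comm (s := univ) (t := univ), ← Finset.sum_add_distrib, Finset.mul_sum]
  refine Finset.sum_le_sum fun φ _ => ?_
  rw [← Finset.mul_sum, ← mul_add, mul_left_comm]
  refine mul_le_mul_of_nonneg_left ?_ (M.p_nonneg φ)
  have hc := (M.c_pos e).le
  by_cases h : A φ ∧ e ∈ Ssel M πs φ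
  · by_cases h3 : e ∈ Ssel M σ φ
    · obtain ⟨ψ, hψ⟩ := exists_node h3
      have := Finset.single_le_sum (f := fun ψ => (if (A φ ∧ e ∈ Ssel M πs φ ∧ e ∈ Ssel M σ φ) ∧
            visits M σ φ ψ ∧ M.f ψ < M.Q ∧ σ ψ = e then (1 : ℝ) else 0) * M.c e)
        (fun ψ _ => by positivity) (Finset.mem_univ ψ)
      simp only [h, h3, hψ, and_self, if_true, not_true, and_false, if_false, true_and] at this ⊢
      linarith
    · simp [h, h3]
  · rw [if_neg h, mul_zero]
    positivity

/-- For every marker index `i` and every `ψ ∈ N(σ)` with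
`Pr[ψ ↝ i] > 0`: `E[λ_i | ψ ↝ i] ≤ (α·E[μ* | ψ ↝ i] / (Q − f(ρ_i)))·ε_i`. -/
theorem conditional_lam_bound
    (M : Problem E O) (α : ℝ) (hα : 1 ≤ α)
    (σ : Sub E O → E) (hσ : IsGreedy M α σ)
    (πs : Sub E O → E) (hπs : IsOptimal M πs)
    (t : ℕ) (ρ : ℕ → Sub E O)
    (hcard : t = (Nnodes M σ).card)
    (hρmem : ∀ i, 1 ≤ i → i ≤ t → ρ i ∈ Nnodes M σ)
    (hρinj : ∀ i j, 1 ≤ i → i ≤ t → 1 ≤ j → j ≤ t → ρ i = ρ j → i = j)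
    (hρmono : ∀ i j, 1 ≤ i → i ≤ j → j ≤ t → M.f (ρ i) ≤ M.f (ρ j))
    (ε : ℕ → ℝ)
    (hε : ∀ i, 1 ≤ i → i < t → ε i = M.f (ρ (i + 1)) - M.f (ρ i))
    (hεt : 1 ≤ t → ε t = M.Q - M.f (ρ t))
    (i : ℕ) (hi1 : 1 ≤ i) (hit : i ≤ t)
    (ψ : Sub E O) (hmem : ψ ∈ Nnodes M σ)
    (hpos : 0 < Pr M (leadsTo M σ (M.f (ρ i)) ψ)) :
    cEx M (lam M σ (M.f (ρ i)) (ε i)) (leadsTo M σ (M.f (ρ i)) ψ)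
      ≤ α * cEx M (muStar M σ πs) (leadsTo M σ (M.f (ρ i)) ψ) / (M.Q - M.f (ρ i)) * ε i := by
  have hψQ : M.f ψ < M.Q := (Finset.mem_filter.mp hmem).2.1
  have hbQ : M.f (ρ i) < M.Q := (Finset.mem_filter.mp (hρmem i hi1 hit)).2.1
  have hεn : 0 ≤ ε i := by
    rcases hit.lt_or_eq with h | h
    · rw [hε i hi1 h]
      have := hρmono i (i + 1) hi1 (by omega) h
      linarith
    · rw [h, hεt (by omega), ← h]; linarith
  generalize M.f (ρ i) = b at *
  have hψb : M.f ψ ≤ b := by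
    by_contra hcon
    have : Pr M (leadsTo M σ b ψ) = 0 :=
      Finset.sum_eq_zero fun φ _ => if_neg fun h => hcon h.2.1
    linarith
  set A := leadsTo M σ b ψ with hAdef
  set P := Pr M A with hP
  have hσP := hσ.1
  have hn := hσP ψ hψQ
  have hv0 := price_nonneg M ψ (σ ψ) hn
  -- the left hand side
  have hlam : cEx M (lam M σ b (ε i)) A = price M ψ (σ ψ) * ε i := by
    unfold cEx
    rw [div_eq_iff hpos.ne', hP, Pr, Finset.mul_sum]
    refine Finset.sum_congr rfl fun φ _ => ?_
    split_ifs with h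
    · have : lam M σ b (ε i) φ = price M ψ (σ ψ) * ε i := by
        unfold lam
        rw [Finset.sum_eq_single ψ]
        · exact if_pos h
        · intro ψ' _ hne
          refine if_neg fun h' => hne ?_
          exact subext_antisymm' (h.2.2 ψ' h'.1 h'.2.1) (h'.2.2 ψ h.1 h.2.1)
        · simp
      rw [this]; ring
    · simp
  -- per item bound
  have hitem : ∀ e, price M ψ (σ ψ) * ∑ φ, M.p φ *
      ((if A φ ∧ e ∈ Ssel M πs φ then 1 else 0) * (if ψ e = none then Fm M ψ e φ else 0))
      ≤ α * ∑ φ, if A φ then M.p φ * mu M σ πs e φ else 0 := by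
    intro e
    have hmu0 : 0 ≤ ∑ φ, if A φ then M.p φ * mu M σ πs e φ else 0 :=
      Finset.sum_nonneg fun φ _ => by
        split_ifs
        · exact mul_nonneg (M.p_nonneg φ) (mu_nonneg M hσP πs e φ)
        · exact le_rfl
    by_cases he : ψ e = none
    · simp only [he, if_true]
      by_cases hes : e = σ ψ
      · refine le_trans ?_ (le_mul_of_one_le_left hmu0 hα)
        rw [Finset.mul_sum]
        refine Finset.sum_le_sum fun φ _ => ?_
        by_cases hAφ : A φ
        · by_cases hS : e ∈ Ssel M πs φ
          · have hSσ : e ∈ Ssel M σ φ := by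
              rw [hes]; exact mem_Ssel_of_visits hσP hAφ.1 hψQ
            simp only [hAφ, hS, and_self, if_true, one_mul]
            rw [mul_left_comm]
            refine mul_le_mul_of_nonneg_left ?_ (M.p_nonneg φ)
            unfold mu
            rw [if_pos hS, if_pos hSσ]
            have := Finset.single_le_sum (f := fun ψ' : Sub E O =>
                if visits M σ φ ψ' ∧ M.f ψ' < M.Q ∧ σ ψ' = e
                then price M ψ' e * Fm M ψ' e φ else 0)
              (fun ψ' _ => by
                split_ifs with h
                · obtain ⟨_, h2, h3⟩ := h
                  have := hσP ψ' h2
                  rw [h3] at this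
                  exact mul_nonneg (price_nonneg M _ _ this) (Fm_nonneg M _ _ _ this)
                · exact le_rfl) (Finset.mem_univ ψ)
            rw [if_pos (⟨hAφ.1, hψQ, hes.symm⟩ : visits M σ φ ψ ∧ M.f ψ < M.Q ∧ σ ψ = e)] at this
            rw [← hes]
            exact this
          · simp only [hS, and_false, if_false, zero_mul, mul_zero]
            rw [if_pos hAφ]
            exact mul_nonneg (M.p_nonneg φ) (mu_nonneg M hσP πs e φ)
        · simp [hAφ]
      · have hA : ∀ φ o, A (Function.update φ e o) ↔ A φ :=
          fun φ o => leadsTo_update hσP hψQ φ e o he hes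
        have h1 := mu_lower M hσ hπs.1 e A hA
        have h2 := indep_mul M e (fun φ => if A φ ∧ e ∈ Ssel M πs φ then 1 else 0)
          (fun o => M.f (updateSub ψ e o) - M.f ψ)
          (by intro φ o; simp only [hA, Ssel_update hπs.1])
        change ∑ φ, M.p φ * ((if A φ ∧ e ∈ Ssel M πs φ then 1 else 0) * Fm M ψ e φ)
          = _ * Ex M (Fm M ψ e) at h2
        rw [h2]
        have hW : 0 ≤ ∑ φ, M.p φ * (if A φ ∧ e ∈ Ssel M πs φ then (1 : ℝ) else 0) :=
          Finset.sum_nonneg fun φ _ => mul_nonneg (M.p_nonneg φ) (by positivity)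
        have h3 : price M ψ (σ ψ) * Ex M (Fm M ψ e) ≤ α * M.c e := by
          have hp := Ex_Fm_pos M hσ ψ hψQ
          unfold price
          rw [div_mul_eq_mul_div, div_le_iff₀ hp]
          exact hσ.2 ψ hψQ e he
        have h4 := mul_le_mul_of_nonneg_right h3 hW
        have h5 := mul_le_mul_of_nonneg_left h1 (by linarith : (0 : ℝ) ≤ α)
        nlinarith
    · simp only [he, if_false, mul_zero, Finset.sum_const_zero]
      exact mul_nonneg (by linarith) hmu0
  have hsum : price M ψ (σ ψ) * (P * (M.Q - M.f ψ))
      ≤ α * ∑ φ, if A φ then M.p φ * muStar M σ πs φ else 0 := by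
    have h1 : P * (M.Q - M.f ψ) ≤ ∑ e, ∑ φ, M.p φ *
        ((if A φ ∧ e ∈ Ssel M πs φ then 1 else 0) * (if ψ e = none then Fm M ψ e φ else 0)) := by
      rw [Finset.sum_comm, hP, Pr, Finset.sum_mul]
      refine Finset.sum_le_sum fun φ _ => ?_
      by_cases hAφ : A φ
      · obtain ⟨n, hnn⟩ := hAφ.1
        have hc : subext ψ (toSub φ) := hnn ▸ exec_consistent φ n
        have h2 := cover_bound hπs.1 hc
        simp only [hAφ, if_true, true_and]
        rw [← Finset.mul_sum]
        refine mul_le_mul_of_nonneg_left (h2.trans (le_of_eq ?_)) (M.p_nonneg φ)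
        simp only [ite_mul, one_mul, zero_mul]
        rw [Finset.sum_ite_mem, Finset.univ_inter]
      · simp [hAφ]
    have h2 : ∑ φ, (if A φ then M.p φ * muStar M σ πs φ else 0)
        = ∑ e, ∑ φ, if A φ then M.p φ * mu M σ πs e φ else 0 := by
      rw [Finset.sum_comm]
      refine Finset.sum_congr rfl fun φ _ => ?_
      split_ifs
      · rw [muStar, Finset.mul_sum]
      · simp
    rw [h2]
    refine (mul_le_mul_of_nonneg_left h1 hv0).trans ?_
    rw [Finset.mul_sum, Finset.mul_sum]
    exact Finset.sum_le_sum fun e _ => hitem e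
  rw [hlam]
  refine mul_le_mul_of_nonneg_right ?_ hεn
  rw [le_div_iff₀ (by linarith)]
  unfold cEx
  rw [← mul_div_assoc, le_div_iff₀ hpos]
  refine le_trans ?_ hsum
  have h6 : price M ψ (σ ψ) * P * (M.Q - b) ≤ price M ψ (σ ψ) * P * (M.Q - M.f ψ) :=
    mul_le_mul_of_nonneg_left (by linarith) (mul_nonneg hv0 hpos.le)
  nlinarith

end
end SSC
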